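/- For every positive integer n and every positive integer m, there exists a P_{3n}-induced-saturated graph with more than m vertices; consequently, for each positive integer n there are infinitely many (pairwise non-isomorphic) P_{3n}-induced-saturated graphs. -/

import Mathlib

open SimpleGraph

/-- `G` is `H`-induced-saturated: `G` has no induced copy of `H`, removing any edge of `G`
creates an induced copy of `H`, and adding any non-edge of `G` creates an induced copy of `H`. -/
def InducedSaturated {V : Type*} {W : Type*} (G : SimpleGraph V) (H : SimpleGraph W) : Prop :=
  IsEmpty (H ↪g G) ∧
  (∀ u v : V, G.Adj u v → Nonempty (H ↪g G.deleteEdges {s(u, v)})) ∧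
  (∀ u v : V, u ≠ v → ¬ G.Adj u v →
    Nonempty (H ↪g (G ⊔ SimpleGraph.fromEdgeSet {s(u, v)})))

/-!
The complementary prism of the `N`-cycle, the cycle and its complement joined by a perfect matching,
is `P_{N + 1}`-induced-saturated for every `N ≥ 5`.

An induced path visits at most four vertices of the complement, as any two of these that are not
consecutive on the path are adjacent in the cycle, which has no triangle. It visits them
consecutively, and a count of the cycle vertices it misses, combined with the fact that only ends of
its excursions into the cycle have missed neighbors, bounds it by `N` vertices. Conversely, up to
symmetry there are nine kinds of pairs of vertices, and for each of them an explicit path on `N + 1`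
vertices, following long arcs of the cycle, appears when the adjacency of the pair is changed.

Disjoint copies of such a graph stay saturated, however many there are: every vertex starts an
induced path on two and one on `N - 1` vertices, so an edge between two copies creates a path on
`N + 1` vertices. Complete graphs take care of `P_3`.
-/

open Sum
open scoped symmDiff

variable {ι V W : Type*} {G : SimpleGraph V} {H : SimpleGraph W}

theorem symmDiff_edge_adj {u v x y : V} (huv : u ≠ v) :
    (G ∆ edge u v).Adj x y ↔ (G.Adj x y ↔ s(x, y) ≠ s(u, v)) := by
  have hne : G.Adj x y → x ≠ y := Adj.ne
  simp only [symmDiff_def, sup_adj, sdiff_adj, edge_adj, ne_eq, Sym2.eq_iff]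
  grind

theorem symmDiff_edge_of_adj {u v : V} (h : G.Adj u v) :
    G ∆ edge u v = G.deleteEdges {s(u, v)} := by
  rw [symmDiff_of_ge ((edge_le_iff G).2 (.inr h)), deleteEdges, edge]

theorem symmDiff_edge_of_not_adj {u v : V} (h : ¬G.Adj u v) : G ∆ edge u v = G ⊔ edge u v :=
  ((disjoint_edge G).2 h).symmDiff_eq_sup

theorem inducedSaturated_iff_symmDiff_edge :
    InducedSaturated G H ↔
      IsEmpty (H ↪g G) ∧ ∀ u v, u ≠ v → Nonempty (H ↪g G ∆ edge u v) := by
  refine and_congr_right fun _ ↦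
    ⟨fun h u v huv ↦ ?_, fun h ↦ ⟨fun u v huv ↦ ?_, fun u v huv hG ↦ ?_⟩⟩
  · by_cases hG : G.Adj u v
    · exact symmDiff_edge_of_adj hG ▸ h.1 u v hG
    · exact symmDiff_edge_of_not_adj hG ▸ h.2 u v huv hG
  · exact symmDiff_edge_of_adj huv ▸ h u v huv.ne
  · exact symmDiff_edge_of_not_adj hG ▸ h u v huv

/-- Toggling an edge commutes with an embedding. -/
def symmDiffEdgeEmbedding (f : G ↪g H) {u v : V} (huv : u ≠ v) :
    G ∆ edge u v ↪g H ∆ edge (f u) (f v) where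
  toEmbedding := f.toEmbedding
  map_rel_iff' {x y} := by
    simp [symmDiff_edge_adj huv, symmDiff_edge_adj (f.injective.ne huv), f.injective.eq_iff]

/-! ### Induced paths -/

/-- The vertices `p 0, …, p (n - 1)` induce a path in `G`, in this order. The values of `p` from
`n` on are irrelevant. -/
def IsInducedPath (G : SimpleGraph V) (n : ℕ) (p : ℕ → V) : Prop :=
  ∀ ⦃s t⦄, s < t → t < n → p s ≠ p t ∧ (G.Adj (p s) (p t) ↔ s + 1 = t)

namespace IsInducedPath

variable {n : ℕ} {p : ℕ → V}

theorem eq_iff (h : IsInducedPath G n p) {s t : ℕ} (hs : s < n) (ht : t < n) :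
    p s = p t ↔ s = t := by
  grind [IsInducedPath]

theorem adj_iff (h : IsInducedPath G n p) {s t : ℕ} (hs : s < n) (ht : t < n) :
    G.Adj (p s) (p t) ↔ s + 1 = t ∨ t + 1 = s := by
  rcases lt_trichotomy s t with hst | rfl | hst
  · grind [IsInducedPath]
  · simp
  · grind [IsInducedPath, G.adj_comm]

theorem map (h : IsInducedPath G n p) (f : G ↪g H) : IsInducedPath H n (f ∘ p) :=
  fun _ _ hst ht ↦ (h hst ht).imp f.injective.ne f.map_adj_iff.trans

theorem reverse (h : IsInducedPath G n p) : IsInducedPath G n fun t ↦ p (n - 1 - t) := by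
  intro s t hst ht
  rw [Ne, h.eq_iff (by omega) (by omega), h.adj_iff (by omega) (by omega)]
  omega

theorem append {k l : ℕ} {q : ℕ → V} (hp : IsInducedPath G k p) (hq : IsInducedPath G l q)
    (hne : ∀ s < k, ∀ t < l, p s ≠ q t)
    (hadj : ∀ s < k, ∀ t < l, (G.Adj (p s) (q t) ↔ s = 0 ∧ t = 0)) :
    IsInducedPath G (k + l) fun t ↦ if t < k then p (k - 1 - t) else q (t - k) := by
  intro s t hst ht
  by_cases hs : s < k <;> by_cases htk : t < k <;> simp only [hs, htk, if_true, if_false]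
  · exact hp.reverse hst htk
  · refine ⟨hne _ (by omega) _ (by omega), (hadj _ (by omega) _ (by omega)).trans (by omega)⟩
  · omega
  · exact (hq (s := s - k) (t := t - k) (by omega) (by omega)).imp_right (·.trans (by omega))

theorem nonempty_embedding (h : IsInducedPath G n p) : Nonempty (pathGraph n ↪g G) :=
  ⟨{  toFun t := p t
      inj' s t hst := Fin.ext ((h.eq_iff s.2 t.2).1 hst)
      map_rel_iff' {s t} := by
        rw [pathGraph_adj]
        exact h.adj_iff s.2 t.2 }⟩

end IsInducedPath

theorem exists_isInducedPath {n : ℕ} (e : pathGraph (n + 1) ↪g G) :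
    ∃ p, IsInducedPath G (n + 1) p := by
  refine ⟨fun t ↦ e (Fin.ofNat (n + 1) t), fun s t hst ht ↦ ?_⟩
  have hs := hst.trans ht
  rw [e.injective.ne_iff, e.map_adj_iff, pathGraph_adj, Ne, Fin.ext_iff]
  simp only [Fin.val_ofNat, Nat.mod_eq_of_lt hs, Nat.mod_eq_of_lt ht]
  omega

theorem nonempty_embedding_symmDiff_edge_map (f : G ↪g H) {u v : V} (huv : u ≠ v) {n : ℕ}
    (h : ∃ p, IsInducedPath (G ∆ edge u v) n p) :
    Nonempty (pathGraph n ↪g H ∆ edge (f u) (f v)) := by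
  obtain ⟨p, hp⟩ := h
  exact (hp.map (symmDiffEdgeEmbedding f huv)).nonempty_embedding

theorem exists_isInducedPath_two_of_adj {u v : V} (h : G.Adj u v) :
    ∃ p, IsInducedPath G 2 p ∧ p 0 = u := by
  refine ⟨fun t ↦ if t = 0 then u else v, fun s t hst ht ↦ ?_, rfl⟩
  obtain ⟨rfl, rfl⟩ : s = 0 ∧ t = 1 := by omega
  simp [h, h.ne]

/-! ### Disjoint unions of copies -/

theorem isEmpty_embedding_bot_boxProd (hH : H.Preconnected) (h : IsEmpty (H ↪g G)) :
    IsEmpty (H ↪g (⊥ : SimpleGraph ι) □ G) := by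
  refine ⟨fun e ↦ h.false ?_⟩
  have hfst (x y : W) : (e x).1 = (e y).1 :=
    reachable_bot.1 (reachable_boxProd.1 ((hH x y).map e.toHom)).1
  exact
  { toFun x := (e x).2
    inj' x y hxy := e.injective (Prod.ext (hfst x y) hxy)
    map_rel_iff' {x y} := by
      rw [← e.map_adj_iff]
      change G.Adj (e x).2 (e y).2 ↔ _
      simp [boxProd_adj, hfst x y] }

theorem nonempty_pathGraph_embedding_bot_boxProd {k l : ℕ} (hk : 0 < k) (hl : 0 < l)
    (hpk : ∀ v, ∃ p, IsInducedPath G k p ∧ p 0 = v)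
    (hpl : ∀ v, ∃ p, IsInducedPath G l p ∧ p 0 = v) {x y : ι × V} (hxy : x.1 ≠ y.1) :
    Nonempty (pathGraph (k + l) ↪g ((⊥ : SimpleGraph ι) □ G) ∆ edge x y) := by
  obtain ⟨⟨i, u⟩, ⟨j, v⟩⟩ := x, y
  obtain ⟨p, hp, rfl⟩ := hpk u
  obtain ⟨q, hq, rfl⟩ := hpl v
  have hij : i ≠ j := hxy
  have hne : (i, p 0) ≠ (j, q 0) := fun h ↦ hij (congrArg Prod.fst h)
  refine (IsInducedPath.append (p := fun t ↦ (i, p t)) (q := fun t ↦ (j, q t)) ?_ ?_ ?_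
    ?_).nonempty_embedding
  · intro s t hst ht
    simpa [symmDiff_edge_adj hne, boxProd_adj, hij] using hp hst ht
  · intro s t hst ht
    simpa [symmDiff_edge_adj hne, boxProd_adj, hij.symm] using hq hst ht
  · simp [hij]
  · intro s hs t ht
    simp [symmDiff_edge_adj hne, boxProd_adj, hij, hp.eq_iff hs hk, hq.eq_iff ht hl]

theorem InducedSaturated.bot_boxProd {k l : ℕ} (hk : 0 < k) (hl : 0 < l)
    (hG : InducedSaturated G (pathGraph (k + l)))
    (hpk : ∀ v, ∃ p, IsInducedPath G k p ∧ p 0 = v)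
    (hpl : ∀ v, ∃ p, IsInducedPath G l p ∧ p 0 = v) :
    InducedSaturated ((⊥ : SimpleGraph ι) □ G) (pathGraph (k + l)) := by
  rw [inducedSaturated_iff_symmDiff_edge] at hG ⊢
  refine ⟨isEmpty_embedding_bot_boxProd (pathGraph_preconnected _) hG.1, ?_⟩
  rintro ⟨i, u⟩ ⟨j, v⟩ huv
  by_cases hij : i = j
  · subst hij
    have huv : u ≠ v := fun h ↦ huv (congrArg _ h)
    exact (hG.2 u v huv).map (symmDiffEdgeEmbedding ((⊥ : SimpleGraph ι).boxProdRight G i) huv).comp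
  · exact nonempty_pathGraph_embedding_bot_boxProd hk hl hpk hpl hij

/-! ### Complete graphs -/

theorem inducedSaturated_top (hV : 3 ≤ ENat.card V) :
    InducedSaturated (⊤ : SimpleGraph V) (pathGraph 3) := by
  refine ⟨⟨fun e ↦ ?_⟩, fun u v huv ↦ ?_, fun u v huv hG ↦ absurd huv hG⟩
  · have hadj : (pathGraph 3).Adj 0 2 := e.map_adj_iff.1 (e.injective.ne (by decide))
    simp [pathGraph_adj] at hadj
  · obtain ⟨w, hwu, hwv⟩ := ENat.exists_ne_ne_of_three_le hV u v
    have huv := huv.ne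
    refine IsInducedPath.nonempty_embedding
      (p := fun t ↦ if t = 0 then u else if t = 1 then w else v) fun s t hst ht ↦ ?_
    interval_cases t <;> interval_cases s <;> simp [deleteEdges_adj, *, Ne.symm]

/-! ### Graphs without triangles and quadrilaterals -/

theorem not_adj_of_cliqueFree_three (htri : G.CliqueFree 3) {x y z : V} (hxy : G.Adj x y)
    (hyz : G.Adj y z) : ¬G.Adj x z := by
  classical
  exact fun hxz ↦ htri {x, y, z} (is3Clique_triple_iff.2 ⟨hxy, hxz, hyz⟩)

section TwoRegular

variable [LocallyFinite G]

theorem exists_adj_iff_of_isRegularOfDegree_two (hreg : G.IsRegularOfDegree 2) (x : V) :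
    ∃ y z, y ≠ z ∧ ∀ w, G.Adj x w ↔ w = y ∨ w = z := by
  classical
  obtain ⟨y, z, hyz, h⟩ := Finset.card_eq_two.1 (hreg x)
  exact ⟨y, z, hyz, fun w ↦ by simp [← mem_neighborFinset, h]⟩

theorem exists_adj_ne_of_isRegularOfDegree_two (hreg : G.IsRegularOfDegree 2) (x y : V) :
    ∃ z ≠ y, G.Adj x z := by
  obtain ⟨z, w, hzw, h⟩ := exists_adj_iff_of_isRegularOfDegree_two hreg x
  by_cases hzy : z = y
  · exact ⟨w, hzy ▸ hzw.symm, (h w).2 (.inr rfl)⟩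
  · exact ⟨z, hzy, (h z).2 (.inl rfl)⟩

theorem eq_or_eq_of_adj_of_isRegularOfDegree_two (hreg : G.IsRegularOfDegree 2) {x y z w : V}
    (hy : G.Adj x y) (hz : G.Adj x z) (hyz : y ≠ z) (hw : G.Adj x w) : w = y ∨ w = z := by
  grind [exists_adj_iff_of_isRegularOfDegree_two hreg x]

theorem five_le_card_of_isRegularOfDegree_two [Finite V] [Nonempty V]
    (hreg : G.IsRegularOfDegree 2) (htri : G.CliqueFree 3)
    (hquad : ∀ ⦃x y⦄, x ≠ y → (G.commonNeighbors x y).Subsingleton) : 5 ≤ Nat.card V := by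
  classical
  have := Fintype.ofFinite V
  obtain ⟨x⟩ := ‹Nonempty V›
  obtain ⟨y, z, hyz, hx⟩ := exists_adj_iff_of_isRegularOfDegree_two hreg x
  have hxy := (hx y).2 (.inl rfl)
  have hxz := (hx z).2 (.inr rfl)
  obtain ⟨v, hvx, hyv⟩ := exists_adj_ne_of_isRegularOfDegree_two hreg y x
  obtain ⟨w, hwx, hzw⟩ := exists_adj_ne_of_isRegularOfDegree_two hreg z x
  have hyz' : ¬G.Adj y z := not_adj_of_cliqueFree_three htri hxy.symm hxz
  have hvw : v ≠ w := by
    rintro rfl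
    exact hvx (hquad hyz ⟨hyv, hzw⟩ ⟨hxy.symm, hxz.symm⟩)
  have hcard : ({x, y, z, v, w} : Finset V).card = 5 := by
    grind [hxy.ne, hxz.ne, hyv.ne, hzw.ne, G.adj_comm]
  exact hcard ▸ Nat.card_eq_fintype_card (α := V) ▸ Finset.card_le_univ _

end TwoRegular

/-! ### Complementary prisms -/

/-- The complementary prism of `G`: the disjoint union of `G` (the vertices `inl x`) and its
complement (the vertices `inr x`), together with the perfect matching that joins `inl x` to
`inr x`. -/
def complementaryPrism (G : SimpleGraph V) : SimpleGraph (V ⊕ V) where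
  Adj
    | inl x, inl y => G.Adj x y
    | inr x, inr y => Gᶜ.Adj x y
    | inl x, inr y => x = y
    | inr x, inl y => x = y
  symm := ⟨by rintro (x | x) (y | y) <;> simp [adj_comm, eq_comm]⟩
  loopless := ⟨by rintro (x | x) <;> simp⟩

@[simp] theorem complementaryPrism_adj_inl_inl {x y : V} :
    (complementaryPrism G).Adj (inl x) (inl y) ↔ G.Adj x y := Iff.rfl

@[simp] theorem complementaryPrism_adj_inr_inr {x y : V} :
    (complementaryPrism G).Adj (inr x) (inr y) ↔ x ≠ y ∧ ¬G.Adj x y := Iff.rfl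

@[simp] theorem complementaryPrism_adj_inl_inr {x y : V} :
    (complementaryPrism G).Adj (inl x) (inr y) ↔ x = y := Iff.rfl

@[simp] theorem complementaryPrism_adj_inr_inl {x y : V} :
    (complementaryPrism G).Adj (inr x) (inl y) ↔ x = y := Iff.rfl

theorem exists_adj_complementaryPrism (v : V ⊕ V) : ∃ w, (complementaryPrism G).Adj v w := by
  rcases v with x | x
  · exact ⟨inr x, rfl⟩
  · exact ⟨inl x, rfl⟩

/-- The embedding of complementary prisms induced by an embedding of graphs. -/
def complementaryPrismEmbedding (f : G ↪g H) : complementaryPrism G ↪g complementaryPrism H where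
  toEmbedding := f.toEmbedding.sumMap f.toEmbedding
  map_rel_iff' {x y} := by rcases x with x | x <;> rcases y with y | y <;> simp

/-! ### Induced paths in complementary prisms -/

theorem exists_gap_around {P : ℕ → Prop} {s t u : ℕ} (hst : s < t) (htu : t < u) (hs : P s)
    (ht : ¬P t) (hu : P u) :
    ∃ a b, a < t ∧ t < b ∧ b ≤ u ∧ P a ∧ P b ∧ ∀ r, a < r → r < b → ¬P r := by
  classical
  have hb : ∃ b, t < b ∧ P b := ⟨u, htu, hu⟩
  have ha : P (Nat.findGreatest P t) := Nat.findGreatest_spec hst.le hs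
  refine ⟨Nat.findGreatest P t, Nat.find hb, ?_, (Nat.find_spec hb).1,
    Nat.find_le ⟨htu, hu⟩, ha, (Nat.find_spec hb).2, fun r har hrb hr ↦ ?_⟩
  · exact (Nat.findGreatest_le t).lt_of_ne fun h ↦ ht (h ▸ ha)
  · by_cases hrt : r ≤ t
    · exact Nat.findGreatest_is_greatest har hrt hr
    · exact Nat.find_min hb hrb ⟨not_le.1 hrt, hr⟩

namespace IsInducedPath

variable {n : ℕ} {p : ℕ → V ⊕ V} {s t : ℕ} {x y : V}

theorem ne_of_inl_inl (h : IsInducedPath (complementaryPrism G) n p) (hx : p s = inl x)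
    (hy : p t = inl y) (hst : s ≠ t := by omega) (hs : s < n := by omega)
    (ht : t < n := by omega) : x ≠ y := by
  rintro rfl
  exact hst ((h.eq_iff hs ht).1 (hx.trans hy.symm))

theorem ne_of_inr_inr (h : IsInducedPath (complementaryPrism G) n p) (hx : p s = inr x)
    (hy : p t = inr y) (hst : s ≠ t := by omega) (hs : s < n := by omega)
    (ht : t < n := by omega) : x ≠ y := by
  rintro rfl
  exact hst ((h.eq_iff hs ht).1 (hx.trans hy.symm))

theorem adj_iff_of_inl_inl (h : IsInducedPath (complementaryPrism G) n p) (hx : p s = inl x)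
    (hy : p t = inl y) (hs : s < n := by omega) (ht : t < n := by omega) :
    G.Adj x y ↔ s + 1 = t ∨ t + 1 = s := by
  rw [← h.adj_iff hs ht, hx, hy, complementaryPrism_adj_inl_inl]

theorem eq_iff_of_inl_inr (h : IsInducedPath (complementaryPrism G) n p) (hx : p s = inl x)
    (hy : p t = inr y) (hs : s < n := by omega) (ht : t < n := by omega) :
    x = y ↔ s + 1 = t ∨ t + 1 = s := by
  rw [← h.adj_iff hs ht, hx, hy, complementaryPrism_adj_inl_inr]

theorem adj_iff_of_inr_inr (h : IsInducedPath (complementaryPrism G) n p) (hx : p s = inr x)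
    (hy : p t = inr y) (hst : s < t := by omega) (ht : t < n := by omega) :
    G.Adj x y ↔ s + 1 ≠ t := by
  obtain ⟨hne, hadj⟩ := h hst ht
  rw [hx, hy] at hne hadj
  rw [Ne, ← hadj, complementaryPrism_adj_inr_inr, not_and, not_not]
  exact (imp_iff_right fun hxy ↦ hne (congrArg inr hxy)).symm

theorem adj_of_inr_inr (h : IsInducedPath (complementaryPrism G) n p) (hx : p s = inr x)
    (hy : p t = inr y) (hst : s + 1 < t := by omega) (ht : t < n := by omega) : G.Adj x y :=
  (h.adj_iff_of_inr_inr hx hy).2 hst.ne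

theorem isRight_or_isRight (h : IsInducedPath (complementaryPrism G) n p)
    (hx : p (s + 1) = inr x) (hs : s + 2 < n := by omega) :
    (p s).isRight ∨ (p (s + 2)).isRight := by
  by_contra! hlr
  obtain ⟨y, hy⟩ := isLeft_iff.1 (not_isRight.1 hlr.1)
  obtain ⟨z, hz⟩ := isLeft_iff.1 (not_isRight.1 hlr.2)
  have hyx : y = x := (h.eq_iff_of_inl_inr hy hx).2 (by omega)
  have hzx : z = x := (h.eq_iff_of_inl_inr hz hx).2 (by omega)
  exact absurd (hyx.trans hzx.symm) (h.ne_of_inl_inl hy hz)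

/-- The ends of an excursion into `G` are matched to complement vertices that are not joined by
the path, hence adjacent in `G`. -/
theorem eq_add_three_of_isLeft_between (h : IsInducedPath (complementaryPrism G) n p) {u : ℕ}
    (hsu : s + 1 < u) (hu : u < n) (hx : p s = inr x) (hy : p u = inr y)
    (hbetween : ∀ t, s < t → t < u → (p t).isLeft) :
    u = s + 3 ∧ p (s + 1) = inl x ∧ p (s + 2) = inl y := by
  obtain ⟨x', hx'⟩ := isLeft_iff.1 (hbetween (s + 1) (by omega) hsu)
  obtain ⟨y', hy'⟩ := isLeft_iff.1 (hbetween (u - 1) (by omega) (by omega))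
  obtain rfl : x' = x := (h.eq_iff_of_inl_inr hx' hx).2 (by omega)
  obtain rfl : y' = y := (h.eq_iff_of_inl_inr hy' hy).2 (by omega)
  have := (h.adj_iff_of_inl_inl hx' hy').1 (h.adj_of_inr_inr hx hy)
  obtain rfl : u = s + 3 := by omega
  exact ⟨rfl, hx', hy'⟩

theorem le_one_of_inr_inl_inl_inr (h : IsInducedPath (complementaryPrism G) n p)
    (htri : G.CliqueFree 3) (hs : s + 3 < n) (hx : p s = inr x) (hx' : p (s + 1) = inl x)
    (hy' : p (s + 2) = inl y) (hy : p (s + 3) = inr y) : s ≤ 1 := by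
  by_contra! hs1
  obtain ⟨s, rfl⟩ := Nat.exists_eq_add_of_le' hs1
  have hxy : G.Adj x y := h.adj_of_inr_inr hx hy
  obtain ⟨w, hw⟩ : ∃ w, p (s + 1) = inr w :=
    isRight_iff.1 <| (h.isRight_or_isRight hx).resolve_right (by simp [hx'])
  have hwy : G.Adj w y := h.adj_of_inr_inr hw hy
  rcases hv : p s with v | v
  · have hvw : v = w := (h.eq_iff_of_inl_inr hv hw).2 (by omega)
    have := (h.adj_iff_of_inl_inl hv hy').1 (hvw ▸ hwy)
    omega
  · have hvx : G.Adj v x := h.adj_of_inr_inr hv hx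
    have hvy : G.Adj v y := h.adj_of_inr_inr hv hy
    exact not_adj_of_cliqueFree_three htri hvx hxy hvy

theorem le_five_of_inr_inl_inl_inr (h : IsInducedPath (complementaryPrism G) n p)
    (htri : G.CliqueFree 3)
    (hquad : ∀ ⦃x y⦄, x ≠ y → (G.commonNeighbors x y).Subsingleton)
    (hs : s + 3 < n) (hx : p s = inr x) (hx' : p (s + 1) = inl x)
    (hy' : p (s + 2) = inl y) (hy : p (s + 3) = inr y) : n ≤ 5 := by
  by_contra! hn
  have hs1 : s ≤ 1 := h.le_one_of_inr_inl_inl_inr htri hs hx hx' hy' hy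
  have hs2 : n - 1 - (s + 3) ≤ 1 := by
    refine h.reverse.le_one_of_inr_inl_inl_inr (x := y) (y := x) htri (by omega) ?_ ?_ ?_ ?_
    · rwa [show n - 1 - (n - 1 - (s + 3)) = s + 3 by omega]
    · rwa [show n - 1 - (n - 1 - (s + 3) + 1) = s + 2 by omega]
    · rwa [show n - 1 - (n - 1 - (s + 3) + 2) = s + 1 by omega]
    · rwa [show n - 1 - (n - 1 - (s + 3) + 3) = s by omega]
  obtain ⟨rfl, rfl⟩ : s = 1 ∧ n = 6 := by omega
  obtain ⟨w, hw⟩ : ∃ w, p 0 = inr w :=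
    isRight_iff.1 <| (h.isRight_or_isRight hx).resolve_right (by simp [hx'])
  obtain ⟨v, hv⟩ : ∃ v, p 5 = inr v :=
    isRight_iff.1 <| (h.isRight_or_isRight hy).resolve_left (by simp [hy'])
  have hwx : w ≠ x := h.ne_of_inr_inr hw hx
  have hyv : y ≠ v := h.ne_of_inr_inr hy hv
  exact hyv <| hquad hwx
    ⟨h.adj_of_inr_inr hw hy, h.adj_of_inr_inr hx hy⟩
    ⟨h.adj_of_inr_inr hw hv, h.adj_of_inr_inr hx hv⟩

end IsInducedPath

theorem IsInducedPath.isRight_of_isRight_of_isRight {n s t u : ℕ} {p : ℕ → V ⊕ V}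
    (h : IsInducedPath (complementaryPrism G) n p) (htri : G.CliqueFree 3)
    (hquad : ∀ ⦃x y⦄, x ≠ y → (G.commonNeighbors x y).Subsingleton) (hn : 6 ≤ n)
    (hst : s < t) (htu : t < u) (hu : u < n) (hps : (p s).isRight) (hpu : (p u).isRight) :
    (p t).isRight := by
  by_contra hpt
  obtain ⟨a, b, hat, htb, hbu, ha, hb, hab⟩ :=
    exists_gap_around (P := fun r ↦ (p r).isRight) hst htu hps hpt hpu
  obtain ⟨x, hx⟩ := isRight_iff.1 ha
  obtain ⟨y, hy⟩ := isRight_iff.1 hb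
  obtain ⟨rfl, hx', hy'⟩ := h.eq_add_three_of_isLeft_between (by omega) (by omega) hx hy
    fun r har hrb ↦ not_isRight.1 (hab r har hrb)
  have := h.le_five_of_inr_inl_inl_inr htri hquad (by omega) hx hx' hy' hy
  omega

/-- The positions `s < n` at which `p` visits the right summand form the nonempty interval
`[t, u)`. -/
structure IsRightBlock (p : ℕ → V ⊕ W) (n t u : ℕ) : Prop where
  lt : t < u
  le : u ≤ n
  isRight_iff : ∀ s < n, (p s).isRight ↔ t ≤ s ∧ s < u

namespace IsRightBlock

variable {p : ℕ → V ⊕ W} {n s t u : ℕ}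

theorem exists_inr (hb : IsRightBlock p n t u) (hs : t ≤ s := by omega) (hs' : s < u := by omega) :
    ∃ x, p s = inr x :=
  Sum.isRight_iff.1 ((hb.isRight_iff s (hs'.trans_le hb.le)).2 ⟨hs, hs'⟩)

theorem exists_inl (hb : IsRightBlock p n t u) (hs : s < t ∨ u ≤ s := by omega)
    (hsn : s < n := by omega) : ∃ x, p s = inl x := by
  refine isLeft_iff.1 (not_isRight.1 ?_)
  rw [hb.isRight_iff s hsn]
  omega

theorem reverse (hb : IsRightBlock p n t u) :
    IsRightBlock (fun s ↦ p (n - 1 - s)) n (n - u) (n - t) := by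
  obtain ⟨hlt, hle, hiff⟩ := hb
  refine ⟨by omega, by omega, fun s hs ↦ ?_⟩
  rw [hiff _ (by omega)]
  omega

end IsRightBlock

theorem exists_isRightBlock {p : ℕ → V ⊕ W} {n : ℕ} (hne : ∃ s < n, (p s).isRight)
    (hconv : ∀ ⦃s t u⦄, s < t → t < u → u < n → (p s).isRight → (p u).isRight → (p t).isRight) :
    ∃ t u, IsRightBlock p n t u := by
  classical
  obtain ⟨s, hsn, hs⟩ := hne
  let P (r : ℕ) : Prop := (p r).isRight = true
  have hP : ∃ r, P r := ⟨s, hs⟩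
  have hmin : Nat.find hP ≤ s := Nat.find_min' hP hs
  have hmax : s ≤ Nat.findGreatest P (n - 1) := Nat.le_findGreatest (by omega) hs
  have hlast : P (Nat.findGreatest P (n - 1)) :=
    Nat.findGreatest_spec (P := P) (m := s) (by omega) hs
  have hle : Nat.findGreatest P (n - 1) ≤ n - 1 := Nat.findGreatest_le _
  refine ⟨Nat.find hP, Nat.findGreatest P (n - 1) + 1, by omega, by omega, fun r hr ↦
    ⟨fun h ↦ ⟨Nat.find_min' hP h, Nat.lt_succ_of_le (Nat.le_findGreatest (by omega) h)⟩,
      fun ⟨hr₁, hr₂⟩ ↦ ?_⟩⟩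
  rcases hr₁.eq_or_lt with rfl | hr₁
  · exact Nat.find_spec hP
  · rcases (Nat.le_of_lt_succ hr₂).eq_or_lt with rfl | hr₂
    · exact hlast
    · exact hconv hr₁ hr₂ (by omega) (Nat.find_spec hP) hlast

/-- The vertices `v` for which the first `n` terms of `p` avoid `inl v`. -/
def unvisited (p : ℕ → V ⊕ W) (n : ℕ) : Set V := {v | ∀ s < n, p s ≠ inl v}

namespace IsInducedPath

variable {n : ℕ} {p : ℕ → V ⊕ V} {r s t u : ℕ} {x y : V}

theorem ncard_unvisited [Finite V] (h : IsInducedPath (complementaryPrism G) n p)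
    (hb : IsRightBlock p n t u) : (unvisited p n).ncard + n = Nat.card V + (u - t) := by
  have himage : inl '' (unvisited p n)ᶜ = p '' (Set.Iio n \ Set.Ico t u) := by
    ext v
    simp only [unvisited, Set.mem_image, Set.mem_compl_iff, Set.mem_ofPred_eq, Set.mem_sdiff,
      Set.mem_Iio, Set.mem_Ico, not_forall, not_not]
    constructor
    · rintro ⟨x, ⟨s, hs, hx⟩, rfl⟩
      exact ⟨s, ⟨hs, fun h ↦ by simpa [hx] using (hb.isRight_iff s hs).2 h⟩, hx⟩
    · rintro ⟨s, ⟨hs, hst⟩, rfl⟩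
      obtain ⟨x, hx⟩ := hb.exists_inl (s := s)
      exact ⟨x, ⟨s, hs, hx⟩, hx.symm⟩
  have hcompl : (unvisited p n)ᶜ.ncard = n - (u - t) := by
    rw [← Set.ncard_image_of_injective _ inl_injective, himage,
      Set.InjOn.ncard_image fun s hs t ht hst ↦ (h.eq_iff hs.1 ht.1).1 hst,
      Set.ncard_sdiff fun s hs ↦ hs.2.trans_le hb.le]
    simp
  have := Set.ncard_add_ncard_compl (unvisited p n)
  grind [hb.lt, hb.le]

/-- At an interior vertex of an excursion into `G` the path uses both edges of `G`, at an end it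
uses at most one of them. -/
theorem exists_adj_unvisited_iff [LocallyFinite G] (h : IsInducedPath (complementaryPrism G) n p)
    (hb : IsRightBlock p n t u) (hreg : G.IsRegularOfDegree 2) (hx : p r = inl x) (hr : r < n) :
    (∃ v ∈ unvisited p n, G.Adj x v) ↔ r = 0 ∨ r + 1 = t ∨ r = u ∨ r + 1 = n := by
  have hrb : ¬(t ≤ r ∧ r < u) := by simp [← hb.isRight_iff r hr, hx]
  obtain ⟨y, z, hyz, hnbr⟩ := exists_adj_iff_of_isRegularOfDegree_two hreg x
  constructor
  · rintro ⟨v, hv, hxv⟩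
    by_contra! hend
    obtain ⟨y', hy⟩ := hb.exists_inl (s := r - 1)
    obtain ⟨z', hz⟩ := hb.exists_inl (s := r + 1)
    have hxy : G.Adj x y' := (h.adj_iff_of_inl_inl hx hy).2 (by omega)
    have hxz : G.Adj x z' := (h.adj_iff_of_inl_inl hx hz).2 (by omega)
    have hyz : y' ≠ z' := h.ne_of_inl_inl hy hz
    rcases eq_or_eq_of_adj_of_isRegularOfDegree_two hreg hxy hxz hyz hxv with rfl | rfl
    · exact hv _ (by omega) hy
    · exact hv _ (by omega) hz
  · intro hend
    by_contra! hvis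
    have hpos {v : V} (hxv : G.Adj x v) : ∃ a < n, p a = inl v ∧ (r + 1 = a ∨ a + 1 = r) := by
      obtain ⟨a, ha, hav⟩ : ∃ a < n, p a = inl v := by
        simpa [unvisited] using fun h ↦ hvis v h hxv
      exact ⟨a, ha, hav, (h.adj_iff_of_inl_inl hx hav).1 hxv⟩
    obtain ⟨a, ha, hay, har⟩ := hpos ((hnbr y).2 (.inl rfl))
    obtain ⟨b, hbn, hbz, hbr⟩ := hpos ((hnbr z).2 (.inr rfl))
    have hab : a ≠ b := by
      rintro rfl
      exact hyz (inl_injective (hay.symm.trans hbz))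
    have hab' : ¬(t ≤ a ∧ a < u) ∧ ¬(t ≤ b ∧ b < u) := by
      simp [← hb.isRight_iff _ ha, ← hb.isRight_iff _ hbn, hay, hbz]
    have := hb.lt
    omega

theorem exists_isRight_of_card_lt [Finite V] (h : IsInducedPath (complementaryPrism G) n p)
    (hn : Nat.card V < n) : ∃ s < n, (p s).isRight := by
  by_contra! hleft
  have hsub : p '' Set.Iio n ⊆ Set.range inl := by
    rintro _ ⟨s, hs, rfl⟩
    obtain ⟨x, hx⟩ := isLeft_iff.1 (not_isRight.1 (hleft s hs))
    exact ⟨x, hx.symm⟩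
  have hcard := Set.ncard_le_ncard hsub
  rw [Set.InjOn.ncard_image (s := Set.Iio n) fun s hs t ht hst ↦ (h.eq_iff hs ht).1 hst,
    ← Set.image_univ, Set.ncard_image_of_injective _ inl_injective, Set.ncard_univ,
    Set.ncard_Iio_nat] at hcard
  omega

end IsInducedPath

namespace IsRightBlock

variable {n : ℕ} {p : ℕ → V ⊕ V} {t u : ℕ} {x : V}

theorem le_add_four (hb : IsRightBlock p n t u) (h : IsInducedPath (complementaryPrism G) n p)
    (htri : G.CliqueFree 3) : u ≤ t + 4 := by
  by_contra! hut
  have := hb.le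
  obtain ⟨x, hx⟩ := hb.exists_inr (s := t)
  obtain ⟨y, hy⟩ := hb.exists_inr (s := t + 2)
  obtain ⟨z, hz⟩ := hb.exists_inr (s := t + 4)
  exact not_adj_of_cliqueFree_three htri (h.adj_of_inr_inr hx hy) (h.adj_of_inr_inr hy hz)
    (h.adj_of_inr_inr hx hz)

theorem eq_zero_or_eq_of_add_three_le (hb : IsRightBlock p n t u)
    (h : IsInducedPath (complementaryPrism G) n p) (hu : t + 3 ≤ u) : t = 0 ∨ u = n := by
  by_contra! hne
  have := hb.le
  obtain ⟨x, hx⟩ := hb.exists_inr (s := t)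
  obtain ⟨y, hy⟩ := hb.exists_inr (s := u - 1)
  obtain ⟨x', hx'⟩ := hb.exists_inl (s := t - 1)
  obtain ⟨y', hy'⟩ := hb.exists_inl (s := u)
  obtain rfl : x' = x := (h.eq_iff_of_inl_inr hx' hx).2 (by omega)
  obtain rfl : y' = y := (h.eq_iff_of_inl_inr hy' hy).2 (by omega)
  have := (h.adj_iff_of_inl_inl hx' hy').1 (h.adj_of_inr_inr hx hy)
  omega

theorem add_one_ne [Finite V] [LocallyFinite G] (hb : IsRightBlock p n t u)
    (h : IsInducedPath (complementaryPrism G) n p) (hreg : G.IsRegularOfDegree 2)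
    (hn : n = Nat.card V + 1) (hn2 : 2 ≤ n) : t + 1 ≠ u := by
  rintro rfl
  have hempty : unvisited p n = ∅ := by
    rw [← Set.ncard_eq_zero]
    have := h.ncard_unvisited hb
    omega
  have hle := hb.le
  obtain ⟨r, hr, hrn⟩ : ∃ r, (r + 1 = t ∨ r = t + 1) ∧ r < n :=
    t.eq_zero_or_pos.elim (fun _ ↦ ⟨t + 1, by omega⟩) fun _ ↦ ⟨t - 1, by omega⟩
  obtain ⟨x, hx⟩ := hb.exists_inl (s := r)
  simpa [hempty] using (h.exists_adj_unvisited_iff hb hreg hx hrn).2 (by omega)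

theorem add_two_eq [Finite V] [LocallyFinite G]
    (hb : IsRightBlock p n t (t + 2)) (h : IsInducedPath (complementaryPrism G) n p)
    (hreg : G.IsRegularOfDegree 2) (hn : n = Nat.card V + 1) (hn2 : 5 ≤ n) (ht : 0 < t) :
    t + 2 = n := by
  by_contra hne
  have hle := hb.le
  obtain ⟨v, hv⟩ : ∃ v, unvisited p n = {v} := by
    rw [← Set.ncard_eq_one]
    have := h.ncard_unvisited hb
    omega
  have hends {a b c : ℕ} (hab : a < b) (hbc : b < c) (hc : c < n)
      (ha : a = 0 ∨ a + 1 = t ∨ a = t + 2 ∨ a + 1 = n)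
      (hb' : b = 0 ∨ b + 1 = t ∨ b = t + 2 ∨ b + 1 = n)
      (hc' : c = 0 ∨ c + 1 = t ∨ c = t + 2 ∨ c + 1 = n) : False := by
    have hadj {r : ℕ} (hr : r < n) (hend : r = 0 ∨ r + 1 = t ∨ r = t + 2 ∨ r + 1 = n) :
        ∃ x, p r = inl x ∧ G.Adj v x := by
      obtain ⟨x, hx⟩ := hb.exists_inl (s := r)
      exact ⟨x, hx, by simpa [hv, G.adj_comm] using
        (h.exists_adj_unvisited_iff hb hreg hx hr).2 hend⟩
    obtain ⟨x, hx, hvx⟩ := hadj (hab.trans (hbc.trans hc)) ha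
    obtain ⟨y, hy, hvy⟩ := hadj (hbc.trans hc) hb'
    obtain ⟨z, hz, hvz⟩ := hadj hc hc'
    have hxy : x ≠ y := h.ne_of_inl_inl hx hy
    rcases eq_or_eq_of_adj_of_isRegularOfDegree_two hreg hvx hvy hxy hvz with rfl | rfl
    · exact (h.ne_of_inl_inl hx hz).irrefl
    · exact (h.ne_of_inl_inl hy hz).irrefl
  by_cases ht1 : t = 1
  · exact hends (a := 0) (b := t + 2) (c := n - 1)
      (by omega) (by omega) (by omega) (by omega) (by omega) (by omega)
  · exact hends (a := 0) (b := t - 1) (c := t + 2)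
      (by omega) (by omega) (by omega) (by omega) (by omega) (by omega)

theorem mem_unvisited_iff [Finite V] (hb : IsRightBlock p n t n)
    (h : IsInducedPath (complementaryPrism G) n p) (hn : n = Nat.card V + 1) :
    x ∈ unvisited p n ↔ ∃ s, t < s ∧ s < n ∧ p s = inr x := by
  have hlt := hb.lt
  let S : Set V := {x | ∃ s, t < s ∧ s < n ∧ p s = inr x}
  suffices unvisited p n = S from Set.ext_iff.1 this x
  refine (Set.eq_of_subset_of_ncard_le ?_ ?_).symm
  · rintro x ⟨s, hts, hs, hx⟩ r hr hrx
    have hrs := (h.eq_iff_of_inl_inr hrx hx).1 rfl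
    obtain ⟨y, hy⟩ := hb.exists_inr (s := r)
    simp [hy] at hrx
  · have himage : inr '' S = p '' Set.Ioo t n := by
      ext v
      constructor
      · rintro ⟨x, ⟨s, hts, hs, hx⟩, rfl⟩
        exact ⟨s, ⟨hts, hs⟩, hx⟩
      · rintro ⟨s, ⟨hts, hs⟩, rfl⟩
        obtain ⟨x, hx⟩ := hb.exists_inr (s := s)
        exact ⟨x, ⟨s, hts, hs, hx⟩, hx.symm⟩
    have hS : S.ncard = n - t - 1 := by
      rw [← Set.ncard_image_of_injective _ inr_injective, himage,
        Set.InjOn.ncard_image fun s hs t ht hst ↦ (h.eq_iff hs.2 ht.2).1 hst]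
      simp
    have := h.ncard_unvisited hb
    omega

theorem add_four_le [Finite V] [LocallyFinite G] (hb : IsRightBlock p n t n)
    (h : IsInducedPath (complementaryPrism G) n p) (hreg : G.IsRegularOfDegree 2)
    (hn : n = Nat.card V + 1) (ht : t + 2 ≤ n) (ht0 : 0 < t) : t + 4 ≤ n := by
  by_contra! htn
  obtain ⟨x, hx⟩ := hb.exists_inr (s := t)
  obtain ⟨y, hy⟩ := hb.exists_inr (s := t + 1)
  obtain ⟨x', hx'⟩ := hb.exists_inl (s := t - 1)
  obtain rfl : x' = x := (h.eq_iff_of_inl_inr hx' hx).2 (by omega)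
  have hxy : ¬G.Adj x' y := by simp [h.adj_iff_of_inr_inr hx hy]
  have hyun : y ∈ unvisited p n := (hb.mem_unvisited_iff h hn).2 ⟨t + 1, by omega, ht, hy⟩
  have hnbr {v : V} (hyv : G.Adj y v) : p 0 = inl v := by
    have hv : v ∉ unvisited p n := by
      rw [hb.mem_unvisited_iff h hn]
      rintro ⟨s, hts, hs, hv⟩
      obtain rfl | rfl : s = t + 1 ∨ s = t + 2 := by omega
      · exact hyv.ne (inr_injective (hy.symm.trans hv))
      · exact (h.adj_iff_of_inr_inr hy hv).1 hyv rfl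
    obtain ⟨r, hr, hrv⟩ : ∃ r < n, p r = inl v := by simpa [unvisited] using hv
    have hrt : r ≠ t - 1 := by
      rintro rfl
      exact hxy (inl_injective (hx'.symm.trans hrv) ▸ hyv.symm)
    have hrb : ¬(t ≤ r ∧ r < n) := by simp [← hb.isRight_iff r hr, hrv]
    have := (h.exists_adj_unvisited_iff hb hreg hrv hr).1 ⟨y, hyun, hyv.symm⟩
    obtain rfl : r = 0 := by omega
    exact hrv
  obtain ⟨v, w, hvw, hyw⟩ := exists_adj_iff_of_isRegularOfDegree_two hreg y
  have hv : p 0 = inl v := hnbr ((hyw v).2 (.inl rfl))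
  have hw : p 0 = inl w := hnbr ((hyw w).2 (.inr rfl))
  exact hvw (inl_injective (hv.symm.trans hw))

theorem le_one_of_add_four [LocallyFinite G] (hb : IsRightBlock p n t (t + 4))
    (h : IsInducedPath (complementaryPrism G) n p) (hreg : G.IsRegularOfDegree 2) : t ≤ 1 := by
  by_contra! ht
  have := hb.le
  obtain ⟨x, hx⟩ := hb.exists_inr (s := t)
  obtain ⟨z, hz⟩ := hb.exists_inr (s := t + 2)
  obtain ⟨w, hw⟩ := hb.exists_inr (s := t + 3)
  obtain ⟨x', hx'⟩ := hb.exists_inl (s := t - 1)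
  obtain ⟨v, hv⟩ := hb.exists_inl (s := t - 2)
  obtain rfl : x' = x := (h.eq_iff_of_inl_inr hx' hx).2 (by omega)
  have hxz := h.adj_of_inr_inr hx hz
  have hxw := h.adj_of_inr_inr hx hw
  have hxv : G.Adj x' v := (h.adj_iff_of_inl_inl hx' hv).2 (by omega)
  have hzw : z ≠ w := h.ne_of_inr_inr hz hw
  rcases eq_or_eq_of_adj_of_isRegularOfDegree_two hreg hxz hxw hzw hxv with rfl | rfl
  · have := (h.eq_iff_of_inl_inr hv hz).1 rfl
    omega
  · have := (h.eq_iff_of_inl_inr hv hw).1 rfl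
    omega

end IsRightBlock

theorem IsRightBlock.ne_right [Finite V] [LocallyFinite G] {n t u : ℕ} {p : ℕ → V ⊕ V}
    (hb : IsRightBlock p n t u) (h : IsInducedPath (complementaryPrism G) n p)
    (hreg : G.IsRegularOfDegree 2) (htri : G.CliqueFree 3) (hn : n = Nat.card V + 1)
    (hn6 : 6 ≤ n) : u ≠ n := by
  rintro rfl
  have h4 := hb.le_add_four h htri
  have h1 := hb.add_one_ne h hreg hn (by omega)
  have hlt := hb.lt
  have h5 := hb.add_four_le h hreg hn (by omega) (by omega)
  obtain rfl : u = t + 4 := by omega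
  have := hb.le_one_of_add_four h hreg
  omega

theorem isEmpty_pathGraph_embedding_complementaryPrism [Finite V] [LocallyFinite G]
    (hreg : G.IsRegularOfDegree 2) (htri : G.CliqueFree 3)
    (hquad : ∀ ⦃x y⦄, x ≠ y → (G.commonNeighbors x y).Subsingleton) :
    IsEmpty (pathGraph (Nat.card V + 1) ↪g complementaryPrism G) := by
  refine ⟨fun e ↦ ?_⟩
  obtain ⟨p, h⟩ := exists_isInducedPath e
  obtain ⟨n, hn⟩ : ∃ n, n = Nat.card V + 1 := ⟨_, rfl⟩
  rw [← hn] at h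
  have : Nonempty V := ⟨(p 0).elim id id⟩
  have hV := five_le_card_of_isRegularOfDegree_two hreg htri hquad
  obtain ⟨t, u, hb⟩ := exists_isRightBlock (h.exists_isRight_of_card_lt (by omega)) fun _ _ _ ↦
    h.isRight_of_isRight_of_isRight htri hquad (by omega)
  have hu : u ≠ n := hb.ne_right h hreg htri hn (by omega)
  have ht : n - t ≠ n := hb.reverse.ne_right h.reverse hreg htri hn (by omega)
  have h3 : ¬t + 3 ≤ u := fun h3 ↦ (hb.eq_zero_or_eq_of_add_three_le h h3).elim (by omega) hu
  have h1 := hb.add_one_ne h hreg hn (by omega)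
  have hlt := hb.lt
  obtain rfl : u = t + 2 := by omega
  exact hu (hb.add_two_eq h hreg hn (by omega) (by omega))

/-! ### Complementary prisms of cycles -/

section Cycle

variable {N : ℕ}

theorem cycleGraph_adj_iff_val (hN : 2 ≤ N) {u v : Fin N} :
    (cycleGraph N).Adj u v ↔ (u : ℕ) + 1 = v ∨ (v : ℕ) + 1 = u ∨
      ((u : ℕ) = 0 ∧ (v : ℕ) + 1 = N) ∨ ((v : ℕ) = 0 ∧ (u : ℕ) + 1 = N) := by
  rw [cycleGraph_adj']
  rcases lt_trichotomy u v with huv | rfl | huv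
  · rw [Fin.coe_sub_iff_lt.2 huv, Fin.coe_sub_iff_le.2 huv.le]
    omega
  · have : (u - u).val = 0 := Fin.coe_sub_iff_le.2 le_rfl ▸ Nat.sub_self _
    omega
  · rw [Fin.coe_sub_iff_lt.2 huv, Fin.coe_sub_iff_le.2 huv.le]
    omega

theorem isRegularOfDegree_two_cycleGraph (hN : 3 ≤ N) : (cycleGraph N).IsRegularOfDegree 2 := by
  obtain ⟨N, rfl⟩ := Nat.exists_eq_add_of_le' hN
  exact fun _ ↦ cycleGraph_degree_three_le

theorem cliqueFree_three_cycleGraph (hN : 4 ≤ N) : (cycleGraph N).CliqueFree 3 := by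
  intro s hs
  obtain ⟨x, y, z, hxy, hxz, hyz, -⟩ := is3Clique_iff.1 hs
  simp only [cycleGraph_adj_iff_val (by omega : 2 ≤ N)] at hxy hxz hyz
  omega

theorem subsingleton_commonNeighbors_cycleGraph (hN : 5 ≤ N) ⦃x y : Fin N⦄ (hxy : x ≠ y) :
    ((cycleGraph N).commonNeighbors x y).Subsingleton := by
  rintro u ⟨hxu, hyu⟩ v ⟨hxv, hyv⟩
  simp only [mem_neighborSet, cycleGraph_adj_iff_val (by omega : 2 ≤ N)] at hxu hyu hxv hyv
  omega

theorem val_sub_add_val_sub {x y : Fin N} (hxy : x ≠ y) : (y - x).val + (x - y).val = N := by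
  rcases hxy.lt_or_gt with h | h
  · rw [Fin.coe_sub_iff_le.2 h.le, Fin.coe_sub_iff_lt.2 h]
    omega
  · rw [Fin.coe_sub_iff_le.2 h.le, Fin.coe_sub_iff_lt.2 h]
    omega

variable [NeZero N]

/-- The vertex `i` modulo `N` of the copy of the `N`-cycle in its complementary prism. -/
def rim (N : ℕ) [NeZero N] (i : ℕ) : Fin N ⊕ Fin N := inl (Fin.ofNat N i)

/-- The vertex `i` modulo `N` of the copy of the complement of the `N`-cycle in the complementary
prism of the `N`-cycle. -/
def core (N : ℕ) [NeZero N] (i : ℕ) : Fin N ⊕ Fin N := inr (Fin.ofNat N i)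

theorem ofNat_inj {i j : ℕ} (hi : i < N) (hj : j < N) :
    Fin.ofNat N i = Fin.ofNat N j ↔ i = j := by
  rw [Fin.ext_iff, Fin.val_ofNat, Fin.val_ofNat, Nat.mod_eq_of_lt hi, Nat.mod_eq_of_lt hj]

@[simp] theorem rim_inj {i j : ℕ} (hi : i < N) (hj : j < N) : rim N i = rim N j ↔ i = j :=
  inl_injective.eq_iff.trans (ofNat_inj hi hj)

@[simp] theorem core_inj {i j : ℕ} (hi : i < N) (hj : j < N) : core N i = core N j ↔ i = j :=
  inr_injective.eq_iff.trans (ofNat_inj hi hj)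

@[simp] theorem rim_ne_core {i j : ℕ} : rim N i ≠ core N j := inl_ne_inr

@[simp] theorem core_ne_rim {i j : ℕ} : core N i ≠ rim N j := inr_ne_inl

@[simp] theorem adj_rim_rim (hN : 2 ≤ N) {i j : ℕ} (hi : i < N) (hj : j < N) :
    (complementaryPrism (cycleGraph N)).Adj (rim N i) (rim N j) ↔
      i + 1 = j ∨ j + 1 = i ∨ (i = 0 ∧ j + 1 = N) ∨ (j = 0 ∧ i + 1 = N) := by
  rw [rim, rim, complementaryPrism_adj_inl_inl, cycleGraph_adj_iff_val hN, Fin.val_ofNat,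
    Fin.val_ofNat, Nat.mod_eq_of_lt hi, Nat.mod_eq_of_lt hj]

@[simp] theorem adj_core_core (hN : 2 ≤ N) {i j : ℕ} (hi : i < N) (hj : j < N) :
    (complementaryPrism (cycleGraph N)).Adj (core N i) (core N j) ↔
      i ≠ j ∧ ¬(i + 1 = j ∨ j + 1 = i ∨ (i = 0 ∧ j + 1 = N) ∨ (j = 0 ∧ i + 1 = N)) := by
  rw [core, core, complementaryPrism_adj_inr_inr, Ne, ofNat_inj hi hj, cycleGraph_adj_iff_val hN,
    Fin.val_ofNat, Fin.val_ofNat, Nat.mod_eq_of_lt hi, Nat.mod_eq_of_lt hj]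

@[simp] theorem adj_rim_core {i j : ℕ} (hi : i < N) (hj : j < N) :
    (complementaryPrism (cycleGraph N)).Adj (rim N i) (core N j) ↔ i = j :=
  ofNat_inj hi hj

@[simp] theorem adj_core_rim {i j : ℕ} (hi : i < N) (hj : j < N) :
    (complementaryPrism (cycleGraph N)).Adj (core N i) (rim N j) ↔ i = j :=
  ofNat_inj hi hj

theorem exists_isInducedPath_symmDiff_rim_rim_one (hN : 3 ≤ N) :
    ∃ p, IsInducedPath (complementaryPrism (cycleGraph N) ∆
      edge (rim N 0) (rim N 1)) (N + 1) p := by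
  refine ⟨fun t ↦ if t + 1 < N then rim N (t + 1) else if t + 1 = N then rim N 0 else core N 0,
    fun s t hst ht ↦ ?_⟩
  rw [symmDiff_edge_adj (by simp (disch := omega))]
  dsimp only
  split_ifs <;> simp (disch := omega) <;> omega

theorem exists_isInducedPath_symmDiff_rim_rim {d : ℕ} (hd : 2 ≤ d) (hdN : d + 3 ≤ N) :
    ∃ p, IsInducedPath (complementaryPrism (cycleGraph N) ∆
      edge (rim N 0) (rim N d)) (N + 1) p := by
  refine ⟨fun t ↦ if t + 1 < d then rim N (t + 2) else if t + 1 = d then rim N 0 else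
    if t + 3 ≤ N then rim N (N - (t + 1 - d)) else if t + 2 = N then core N (d + 2) else
    if t + 1 = N then core N 1 else core N (d + 1), fun s t hst ht ↦ ?_⟩
  rw [symmDiff_edge_adj (by simp (disch := omega); omega)]
  dsimp only
  split_ifs <;> simp (disch := omega) <;> omega

theorem exists_isInducedPath_symmDiff_rim_core_zero (hN : 4 ≤ N) :
    ∃ p, IsInducedPath (complementaryPrism (cycleGraph N) ∆
      edge (rim N 0) (core N 0)) (N + 1) p := by
  refine ⟨fun t ↦ if t + 1 < N then rim N t else if t + 1 = N then core N (N - 2) else core N 0,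
    fun s t hst ht ↦ ?_⟩
  rw [symmDiff_edge_adj (by simp)]
  dsimp only
  split_ifs <;> simp (disch := omega) <;> omega

theorem exists_isInducedPath_symmDiff_rim_core_one (hN : 3 ≤ N) :
    ∃ p, IsInducedPath (complementaryPrism (cycleGraph N) ∆
      edge (rim N 0) (core N 1)) (N + 1) p := by
  refine ⟨fun t ↦ if t = 0 then core N 1 else if t = 1 then rim N 0 else
    if t < N then rim N (N + 1 - t) else core N 2, fun s t hst ht ↦ ?_⟩
  rw [symmDiff_edge_adj (by simp)]
  dsimp only
  split_ifs <;> simp (disch := omega) <;> omega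

theorem exists_isInducedPath_symmDiff_rim_core_sub_one (hN : 3 ≤ N) :
    ∃ p, IsInducedPath (complementaryPrism (cycleGraph N) ∆
      edge (rim N 0) (core N (N - 1))) (N + 1) p := by
  refine ⟨fun t ↦ if t = 0 then core N (N - 1) else if t < N then rim N (t - 1) else
    core N (N - 2), fun s t hst ht ↦ ?_⟩
  rw [symmDiff_edge_adj (by simp)]
  dsimp only
  split_ifs <;> simp (disch := omega) <;> omega

theorem exists_isInducedPath_symmDiff_rim_core {d : ℕ} (hd : 2 ≤ d) (hdN : d + 2 ≤ N) :
    ∃ p, IsInducedPath (complementaryPrism (cycleGraph N) ∆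
      edge (rim N 0) (core N d)) (N + 1) p := by
  refine ⟨fun t ↦ if t + 2 < d then rim N (t + 2) else if t + 2 = d then core N (d - 1) else
    if t + 1 = d then core N (d + 1) else if t + 1 < N then rim N (t + 1) else
    if t + 1 = N then rim N 0 else core N d, fun s t hst ht ↦ ?_⟩
  rw [symmDiff_edge_adj (by simp)]
  dsimp only
  split_ifs <;> simp (disch := omega) <;> omega

theorem exists_isInducedPath_symmDiff_core_core_one (hN : 3 ≤ N) :
    ∃ p, IsInducedPath (complementaryPrism (cycleGraph N) ∆
      edge (core N 0) (core N 1)) (N + 1) p := by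
  refine ⟨fun t ↦ if t + 2 < N then rim N (t + 2) else if t + 2 = N then rim N 0 else
    if t + 1 = N then core N 0 else core N 1, fun s t hst ht ↦ ?_⟩
  rw [symmDiff_edge_adj (by simp (disch := omega))]
  dsimp only
  split_ifs <;> simp (disch := omega) <;> omega

theorem exists_isInducedPath_symmDiff_core_core_two (hN : 4 ≤ N) :
    ∃ p, IsInducedPath (complementaryPrism (cycleGraph N) ∆
      edge (core N 0) (core N 2)) (N + 1) p := by
  refine ⟨fun t ↦ if t = 0 then core N 0 else if t = 1 then rim N 0 else
    if t < N then rim N (N + 1 - t) else core N 2, fun s t hst ht ↦ ?_⟩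
  rw [symmDiff_edge_adj (by simp (disch := omega))]
  dsimp only
  split_ifs <;> simp (disch := omega) <;> omega

theorem exists_isInducedPath_symmDiff_core_core {d : ℕ} (hd : 3 ≤ d) (hdN : d + 3 ≤ N) :
    ∃ p, IsInducedPath (complementaryPrism (cycleGraph N) ∆
      edge (core N 0) (core N d)) (N + 1) p := by
  refine ⟨fun t ↦ if t + 3 ≤ d then rim N (d - 3 - t) else if t + 2 = d then core N 0 else
    if t + 1 = d then core N (d - 1) else if t = d then core N (N - 1) else
    if t = d + 1 then core N d else rim N (t - 2), fun s t hst ht ↦ ?_⟩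
  rw [symmDiff_edge_adj (by simp (disch := omega); omega)]
  dsimp only
  split_ifs <;> simp (disch := omega) <;> omega

/-- Rotation of the `N`-cycle by `c`. -/
def cycleGraphRotation (c : Fin N) : cycleGraph N ↪g cycleGraph N where
  toEmbedding := addLeftEmbedding c
  map_rel_iff' {x y} := by simp [cycleGraph_adj']

/-- The automorphism of the complementary prism of the `N`-cycle induced by rotating the `N`-cycle
by `c`. -/
def prismRotation (c : Fin N) :
    complementaryPrism (cycleGraph N) ↪g complementaryPrism (cycleGraph N) :=
  complementaryPrismEmbedding (cycleGraphRotation c)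

theorem prismRotation_rim (c : Fin N) (i : ℕ) :
    prismRotation c (rim N i) = inl (c + Fin.ofNat N i) := rfl

theorem prismRotation_core (c : Fin N) (i : ℕ) :
    prismRotation c (core N i) = inr (c + Fin.ofNat N i) := rfl

theorem prismRotation_rim_zero (c : Fin N) : prismRotation c (rim N 0) = inl c := by
  simp [prismRotation_rim]

theorem prismRotation_core_zero (c : Fin N) : prismRotation c (core N 0) = inr c := by
  simp [prismRotation_core]

theorem prismRotation_rim_sub (x y : Fin N) : prismRotation x (rim N (y - x).val) = inl y := by
  simp [prismRotation_rim]

theorem prismRotation_core_sub (x y : Fin N) : prismRotation x (core N (y - x).val) = inr y := by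
  simp [prismRotation_core]

theorem nonempty_embedding_symmDiff_inl_inl (hN : 5 ≤ N) {x y : Fin N} (hxy : x ≠ y) :
    Nonempty (pathGraph (N + 1) ↪g complementaryPrism (cycleGraph N) ∆ edge (inl x) (inl y)) := by
  have hval := val_sub_add_val_sub hxy
  wlog hle : 2 * (y - x).val ≤ N generalizing x y
  · rw [edge_comm]
    exact this hxy.symm (by omega) (by omega)
  have hd : 0 < (y - x).val := Fin.pos_iff_ne_zero.2 (sub_ne_zero.2 hxy.symm)
  rw [← prismRotation_rim_zero x, ← prismRotation_rim_sub x y]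
  generalize (y - x).val = d at *
  refine nonempty_embedding_symmDiff_edge_map (prismRotation x) (by simp (disch := omega); omega) ?_
  obtain rfl | hd2 : d = 1 ∨ 2 ≤ d := by omega
  · exact exists_isInducedPath_symmDiff_rim_rim_one (by omega)
  · exact exists_isInducedPath_symmDiff_rim_rim hd2 (by omega)

theorem nonempty_embedding_symmDiff_inr_inr (hN : 3 ≤ N) {x y : Fin N} (hxy : x ≠ y) :
    Nonempty (pathGraph (N + 1) ↪g complementaryPrism (cycleGraph N) ∆ edge (inr x) (inr y)) := by
  have hval := val_sub_add_val_sub hxy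
  wlog hle : 2 * (y - x).val ≤ N generalizing x y
  · rw [edge_comm]
    exact this hxy.symm (by omega) (by omega)
  have hd : 0 < (y - x).val := Fin.pos_iff_ne_zero.2 (sub_ne_zero.2 hxy.symm)
  rw [← prismRotation_core_zero x, ← prismRotation_core_sub x y]
  generalize (y - x).val = d at *
  refine nonempty_embedding_symmDiff_edge_map (prismRotation x) (by simp (disch := omega); omega) ?_
  obtain rfl | rfl | hd3 : d = 1 ∨ d = 2 ∨ 3 ≤ d := by omega
  · exact exists_isInducedPath_symmDiff_core_core_one (by omega)
  · exact exists_isInducedPath_symmDiff_core_core_two (by omega)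
  · exact exists_isInducedPath_symmDiff_core_core hd3 (by omega)

theorem nonempty_embedding_symmDiff_inl_inr (hN : 4 ≤ N) (x y : Fin N) :
    Nonempty (pathGraph (N + 1) ↪g complementaryPrism (cycleGraph N) ∆ edge (inl x) (inr y)) := by
  have hd : (y - x).val < N := (y - x).isLt
  rw [← prismRotation_rim_zero x, ← prismRotation_core_sub x y]
  generalize (y - x).val = d at *
  refine nonempty_embedding_symmDiff_edge_map (prismRotation x) (by simp) ?_
  obtain rfl | rfl | rfl | hd2 : d = 0 ∨ d = 1 ∨ d = N - 1 ∨ (2 ≤ d ∧ d + 2 ≤ N) := by omega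
  · exact exists_isInducedPath_symmDiff_rim_core_zero (by omega)
  · exact exists_isInducedPath_symmDiff_rim_core_one (by omega)
  · exact exists_isInducedPath_symmDiff_rim_core_sub_one (by omega)
  · exact exists_isInducedPath_symmDiff_rim_core hd2.1 hd2.2

theorem inducedSaturated_complementaryPrism_cycleGraph (hN : 5 ≤ N) :
    InducedSaturated (complementaryPrism (cycleGraph N)) (pathGraph (N + 1)) := by
  rw [inducedSaturated_iff_symmDiff_edge]
  constructor
  · have := isEmpty_pathGraph_embedding_complementaryPrism
      (isRegularOfDegree_two_cycleGraph (by omega)) (cliqueFree_three_cycleGraph (by omega))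
      (subsingleton_commonNeighbors_cycleGraph hN)
    rwa [Nat.card_fin] at this
  · rintro (x | x) (y | y) hxy
    · exact nonempty_embedding_symmDiff_inl_inl hN (by simpa using hxy)
    · exact nonempty_embedding_symmDiff_inl_inr (by omega) x y
    · rw [edge_comm]
      exact nonempty_embedding_symmDiff_inl_inr (by omega) y x
    · exact nonempty_embedding_symmDiff_inr_inr (by omega) (by simpa using hxy)

theorem exists_isInducedPath_complementaryPrism_cycleGraph (hN : 2 ≤ N) (v : Fin N ⊕ Fin N) :
    ∃ p, IsInducedPath (complementaryPrism (cycleGraph N)) (N - 1) p ∧ p 0 = v := by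
  rcases v with x | x
  · have hpath : IsInducedPath (complementaryPrism (cycleGraph N)) (N - 1) (rim N) :=
      fun s t hst ht ↦ by simp (disch := omega); omega
    exact ⟨_, hpath.map (prismRotation x), prismRotation_rim_zero x⟩
  · have hpath : IsInducedPath (complementaryPrism (cycleGraph N)) (N - 1)
        fun t ↦ if t = 0 then core N 0 else rim N (t - 1) := by
      intro s t hst ht
      dsimp only
      split_ifs <;> simp (disch := omega) <;> omega
    exact ⟨_, hpath.map (prismRotation x), prismRotation_core_zero x⟩

end Cycle

theorem exists_large_P3n_induced_saturated_general (k m : ℕ) (hk : k = 3 ∨ 6 ≤ k) :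
    ∃ (V : Type) (_ : Fintype V) (G : SimpleGraph V),
      m < Nat.card V ∧ InducedSaturated G (pathGraph k) := by
  obtain rfl | hk := hk
  · exact ⟨Fin (m + 3), inferInstance, ⊤, by simp, inducedSaturated_top (by simp)⟩
  obtain ⟨N, rfl⟩ : ∃ N, k = N - 1 + 2 := ⟨k - 1, by omega⟩
  have hN : 5 ≤ N := by omega
  have : NeZero N := ⟨by omega⟩
  refine ⟨Fin (m + 1) × (Fin N ⊕ Fin N), inferInstance,
    ⊥ □ complementaryPrism (cycleGraph N), ?_, ?_⟩
  · simp only [Nat.card_prod, Nat.card_sum, Nat.card_fin]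
    nlinarith
  · refine InducedSaturated.bot_boxProd (by omega) two_pos ?_
      (exists_isInducedPath_complementaryPrism_cycleGraph (by omega)) fun v ↦ ?_
    · rw [show N - 1 + 2 = N + 1 by omega]
      exact inducedSaturated_complementaryPrism_cycleGraph hN
    · obtain ⟨w, hvw⟩ := exists_adj_complementaryPrism (G := cycleGraph N) v
      exact exists_isInducedPath_two_of_adj hvw

/-- For every positive integer `n` and every positive integer `m`, there exists a
`P_{3n}`-induced-saturated graph with more than `m` vertices; consequently, for each `n`
there are infinitely many pairwise non-isomorphic `P_{3n}`-induced-saturated graphs. -/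
theorem exists_large_P3n_induced_saturated (n m : ℕ) (hn : 0 < n) (hm : 0 < m) :
    ∃ (V : Type) (_ : Fintype V) (G : SimpleGraph V),
      m < Nat.card V ∧ InducedSaturated G (pathGraph (3 * n)) :=
  exists_large_P3n_induced_saturated_general (3 * n) m (by omega)
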